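/- Let n ≥ 2 and let Q be an n×n Laplacian matrix, with effective resistances ω_ij = (e_i − e_j)ᵀ·Q†·(e_i − e_j). Then the effective resistance is a metric on the index set: ω_ij ≥ 0 with ω_ij = 0 if and only if i = j; ω_ij = ω_ji for all i, j; and ω_ij + ω_jk ≥ ω_ik for all i, j, k. -/

import Mathlib

open Matrix

/-- A Laplacian matrix: symmetric, nonpositive off-diagonal entries, zero row sums,
and irreducible. -/
def IsLaplacian {m : Type*} [Fintype m] [DecidableEq m] (Q : Matrix m m ℝ) : Prop :=
  Q.IsSymm ∧ (∀ i j, i ≠ j → Q i j ≤ 0) ∧ (Q *ᵥ (fun _ => (1 : ℝ)) = 0) ∧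
  ∀ V : Finset m, V.Nonempty → V ≠ Finset.univ → ∃ i ∈ V, ∃ j ∉ V, Q i j ≠ 0

/-- `B` is the Moore–Penrose pseudoinverse of `A`. -/
def IsMoorePenrose {k l : Type*} [Fintype k] [Fintype l]
    (A : Matrix k l ℝ) (B : Matrix l k ℝ) : Prop :=
  A * B * A = A ∧ B * A * B = B ∧ (A * B)ᵀ = A * B ∧ (B * A)ᵀ = B * A


/-- Maximum principle. -/
theorem lap_max {n : ℕ} {Q : Matrix (Fin n) (Fin n) ℝ} (hQ : IsLaplacian Q)
    (x : Fin n → ℝ) (a : Fin n) (h : ∀ i, i ≠ a → (Q *ᵥ x) i ≤ 0) (i : Fin n) :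
    x i ≤ x a := by
  classical
  obtain ⟨-, hoff, hone, hirr⟩ := hQ
  by_contra hlt
  push Not at hlt
  obtain ⟨m, -, hm⟩ := Finset.exists_max_image Finset.univ x ⟨a, Finset.mem_univ a⟩
  have hm' : ∀ k, x k ≤ x m := fun k => hm k (Finset.mem_univ k)
  have ham : x a < x m := lt_of_lt_of_le hlt (hm' i)
  obtain ⟨p, hp, q, hq, hpq⟩ := hirr (Finset.univ.filter fun k => x k = x m)
    ⟨m, by simp⟩ (by
      intro he
      have : a ∈ Finset.univ.filter fun k => x k = x m := by rw [he]; simp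
      simp at this
      linarith)
  simp only [Finset.mem_filter, Finset.mem_univ, true_and] at hp hq
  have hne : p ≠ q := by rintro rfl; exact hq hp
  have hpa : p ≠ a := by rintro rfl; linarith
  have hneg : Q p q < 0 := lt_of_le_of_ne (hoff p q hne) hpq
  have hxq : x q < x m := lt_of_le_of_ne (hm' q) hq
  have hrow : ∑ k, Q p k = 0 := by
    have := congrFun hone p
    simpa [Matrix.mulVec, dotProduct] using this
  have hsum : (Q *ᵥ x) p = ∑ k, Q p k * (x k - x m) := by
    simp only [mul_sub, Finset.sum_sub_distrib, ← Finset.sum_mul, hrow]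
    simp [Matrix.mulVec, dotProduct]
  have hpos : 0 < ∑ k, Q p k * (x k - x m) := by
    apply Finset.sum_pos'
    · intro k _
      by_cases hk : p = k
      · subst hk; simp [hp]
      · exact mul_nonneg_of_nonpos_of_nonpos (hoff p k hk) (by linarith [hm' k])
    · exact ⟨q, Finset.mem_univ q, mul_pos_of_neg_of_neg hneg (by linarith)⟩
  have := h p hpa
  linarith

theorem lap_ker {n : ℕ} {Q : Matrix (Fin n) (Fin n) ℝ} (hQ : IsLaplacian Q)
    (x : Fin n → ℝ) (h : Q *ᵥ x = 0) (i j : Fin n) : x i = x j :=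
  le_antisymm (lap_max hQ x j (fun k _ => by simp [h]) i)
    (lap_max hQ x i (fun k _ => by simp [h]) j)

theorem lap_solve {n : ℕ} {Q Qd : Matrix (Fin n) (Fin n) ℝ} (hQ : IsLaplacian Q)
    (hQd : IsMoorePenrose Q Qd) (i j : Fin n) :
    Q *ᵥ (Qd *ᵥ (Pi.single i (1 : ℝ) - Pi.single j 1)) = Pi.single i (1 : ℝ) - Pi.single j 1 := by
  obtain ⟨h1, -, h3, -⟩ := hQd
  have hs : Qᵀ = Q := hQ.1
  have h5 : Q * (Q * Qd) = Q := by
    have := congrArg Matrix.transpose h1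
    rwa [Matrix.transpose_mul, h3, hs] at this
  have hM : Q * (1 - Q * Qd) = 0 := by rw [mul_sub, h5]; simp
  have hsym : (1 - Q * Qd)ᵀ = 1 - Q * Qd := by
    rw [Matrix.transpose_sub, h3, Matrix.transpose_one]
  have hcol : ∀ a b c, (1 - Q * Qd) a c = (1 - Q * Qd) b c := by
    intro a b c
    refine lap_ker hQ (fun k => (1 - Q * Qd) k c) ?_ a b
    funext k
    exact congrFun (congrFun hM k) c
  have hrow : ∀ a, (1 - Q * Qd) a i = (1 - Q * Qd) a j := by
    intro a
    have e : ∀ b c, (1 - Q * Qd) b c = (1 - Q * Qd) c b := fun b c =>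
      congrFun (congrFun hsym.symm b) c
    rw [e a i, e a j, hcol i j a]
  have hz : (1 - Q * Qd) *ᵥ (Pi.single i (1 : ℝ) - Pi.single j 1) = 0 := by
    funext a
    rw [Matrix.mulVec_sub, Matrix.mulVec_single_one, Matrix.mulVec_single_one]
    simpa [sub_eq_zero] using hrow a
  rw [Matrix.sub_mulVec, Matrix.one_mulVec, sub_eq_zero] at hz
  rw [Matrix.mulVec_mulVec]
  exact hz.symm

/-- The effective resistance is a metric on the index set. -/
theorem stmt_18 {n : ℕ} (hn : 2 ≤ n) (Q : Matrix (Fin n) (Fin n) ℝ)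
    (hQ : IsLaplacian Q)
    (Qd : Matrix (Fin n) (Fin n) ℝ) (hQd : IsMoorePenrose Q Qd)
    (ω : Fin n → Fin n → ℝ)
    (hω : ∀ i j, ω i j = (Pi.single i (1 : ℝ) - Pi.single j 1) ⬝ᵥ
      (Qd *ᵥ (Pi.single i (1 : ℝ) - Pi.single j 1))) :
    (∀ i j, 0 ≤ ω i j) ∧
    (∀ i j, ω i j = 0 ↔ i = j) ∧
    (∀ i j, ω i j = ω j i) ∧
    (∀ i j k, ω i k ≤ ω i j + ω j k) := by
  have hv : ∀ i j, ω i j = (Qd i i - Qd i j) - (Qd j i - Qd j j) := by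
    intro i j
    rw [hω, sub_dotProduct, single_one_dotProduct, single_one_dotProduct, Matrix.mulVec_sub,
      Matrix.mulVec_single_one, Matrix.mulVec_single_one]
    simp
  have hmax : ∀ i j k, Qd k i - Qd k j ≤ Qd i i - Qd i j := by
    intro i j k
    have := lap_max hQ (Qd *ᵥ (Pi.single i (1 : ℝ) - Pi.single j 1)) i (by
      intro l hl
      rw [lap_solve hQ hQd]
      by_cases hlj : l = j <;> simp [Pi.single_apply, hl, hlj]
      split_ifs <;> simp) k
    rw [Matrix.mulVec_sub, Matrix.mulVec_single_one, Matrix.mulVec_single_one] at this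
    simpa using this
  refine ⟨?_, ?_, ?_, ?_⟩
  · intro i j
    rw [hv]; linarith [hmax i j j]
  · intro i j
    refine ⟨fun h => ?_, fun h => by subst h; rw [hv]; ring⟩
    rw [hv] at h
    have hc : Qd *ᵥ (Pi.single i (1 : ℝ) - Pi.single j 1) = (Qd i i - Qd i j) • fun _ => (1 : ℝ) := by
      funext k
      rw [Matrix.mulVec_sub, Matrix.mulVec_single_one, Matrix.mulVec_single_one]
      have h1 := hmax i j k
      have h2 := hmax j i k
      simp
      linarith
    have hs := lap_solve hQ hQd i j
    rw [hc, Matrix.mulVec_smul, hQ.2.2.1] at hs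
    by_contra hne
    have := congrFun hs i
    simp [Pi.single_apply, hne] at this
  · intro i j
    rw [hv, hv]; ring
  · intro i j k
    rw [hv, hv, hv]
    linarith [hmax j i k, hmax j k i]
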